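/- For all permutations σ ∈ S_p and τ ∈ S_q one has σ/τ ≤ σ\τ in the weak Bruhat order on S_{p+q}. -/

import Mathlib

/-! Symmetric groups `Sₙ` are modelled as `Equiv.Perm (Fin n)` (with `0`-indexed letters, so
the letter `i ∈ {1, …, n}` of the paper corresponds to `i - 1 : Fin n`), with the group law
`σ · τ = σ * τ` given by composition: `(σ * τ) x = σ (τ x)`. -/

/-- `s` is a Coxeter generator `sᵢ`, i.e. the transposition of two consecutive letters. -/
def IsAdjacentTransposition {n : ℕ} (s : Equiv.Perm (Fin n)) : Prop :=
  ∃ (i : ℕ) (h : i + 1 < n), s = Equiv.swap ⟨i, by omega⟩ ⟨i + 1, h⟩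

/-- The length `l(σ)`: the least `k` such that `σ` is a product of `k` Coxeter
generators `sᵢ`. -/
noncomputable def permLength {n : ℕ} (σ : Equiv.Perm (Fin n)) : ℕ :=
  sInf {k | ∃ L : List (Equiv.Perm (Fin n)),
    L.length = k ∧ (∀ s ∈ L, IsAdjacentTransposition s) ∧ L.prod = σ}

/-- The weak Bruhat order on `Sₙ`: `ω ≤ σ` iff there is `τ` with `σ = τ · ω` and
`l(σ) = l(τ) + l(ω)`. -/
def weakLe {n : ℕ} (ω σ : Equiv.Perm (Fin n)) : Prop :=
  ∃ τ : Equiv.Perm (Fin n), σ = τ * ω ∧ permLength σ = permLength τ + permLength ω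

/-- The strict weak Bruhat order. -/
def weakLt {n : ℕ} (ω σ : Equiv.Perm (Fin n)) : Prop :=
  weakLe ω σ ∧ ω ≠ σ

/-- `σ × τ`: the image of `(σ, τ)` under the canonical embedding
`S_p × S_q ↪ S_{p+q}`, where `σ` permutes the first `p` letters and `τ` the last `q`. -/
def blockSum {p q : ℕ} (σ : Equiv.Perm (Fin p)) (τ : Equiv.Perm (Fin q)) :
    Equiv.Perm (Fin (p + q)) :=
  finSumFinEquiv.symm.trans ((Equiv.sumCongr σ τ).trans finSumFinEquiv)

/-- `ξ` is a `(p,q)`-shuffle: `ξ(1) < … < ξ(p)` and `ξ(p+1) < … < ξ(p+q)`. -/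
def IsShuffle (p q : ℕ) (ξ : Equiv.Perm (Fin (p + q))) : Prop :=
  (∀ i j : Fin (p + q), (i : ℕ) < (j : ℕ) → (j : ℕ) < p → ξ i < ξ j) ∧
  (∀ i j : Fin (p + q), p ≤ (i : ℕ) → (i : ℕ) < (j : ℕ) → ξ i < ξ j)

/-- `ξ_{p,q} ∈ S_{p+q}`: the permutation with one-line notation
`(q+1, q+2, …, q+p, 1, 2, …, q)`. -/
def xi (p q : ℕ) : Equiv.Perm (Fin (p + q)) :=
  finSumFinEquiv.symm.trans ((Equiv.sumComm (Fin p) (Fin q)).trans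
    (finSumFinEquiv.trans (finCongr (Nat.add_comm q p))))

/-- Transport of a permutation along an equality of the number of letters. -/
def permCast {m n : ℕ} (h : m = n) (π : Equiv.Perm (Fin m)) : Equiv.Perm (Fin n) :=
  (finCongr h).permCongr π

/-- The grafting `σ ∨ τ ∈ S_{p+q+1}` of `σ ∈ S_p` and `τ ∈ S_q`: in 1-indexed one-line
notation, `(σ∨τ)(i) = σ(i)` for `1 ≤ i ≤ p`, `(σ∨τ)(p+1) = p+q+1`, and
`(σ∨τ)(i) = τ(i-p-1) + p` for `p+2 ≤ i ≤ p+q+1`.  (Equivalently,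
`σ ∨ τ = (σ × τ × 1₁) · s_{p+q} · s_{p+q-1} · ⋯ · s_{p+1}`.) -/
def graft {p q : ℕ} (σ : Equiv.Perm (Fin p)) (τ : Equiv.Perm (Fin q)) :
    Equiv.Perm (Fin (p + q + 1)) :=
  blockSum (blockSum σ τ) (1 : Equiv.Perm (Fin 1)) *
    permCast (by omega) (blockSum (1 : Equiv.Perm (Fin p)) (finRotate (q + 1))⁻¹)

/-- The `over` operation on permutations: `σ / τ := σ × τ`. -/
def overP {p q : ℕ} (σ : Equiv.Perm (Fin p)) (τ : Equiv.Perm (Fin q)) :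
    Equiv.Perm (Fin (p + q)) :=
  blockSum σ τ

/-- The `under` operation on permutations: `σ \ τ := ξ_{p,q} · (σ × τ)`. -/
def underP {p q : ℕ} (σ : Equiv.Perm (Fin p)) (τ : Equiv.Perm (Fin q)) :
    Equiv.Perm (Fin (p + q)) :=
  xi p q * blockSum σ τ

/-! The length of a permutation is its number of inversions. An inversion of `ρ * π` that is not
one of `π` is carried by `π` to an inversion of `ρ`; if `ρ * π` keeps all the inversions of `π`,
this is a bijection, so lengths add up and `π ≤ ρ * π` in the weak order. A shuffle `ξ` is
increasing on each of the two blocks, and the inversions of `σ × τ` lie inside the blocks,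
so `ξ * (σ × τ)` keeps them all. -/

open Equiv Finset

lemma exists_covBy_symm_lt_of_ne_one {α : Type*} [LinearOrder α] [Finite α] {π : Perm α}
    (hπ : π ≠ 1) : ∃ a b, a ⋖ b ∧ π.symm b < π.symm a := by
  have := Fintype.ofFinite α
  let _ : LocallyFiniteOrder α := Fintype.toLocallyFiniteOrder
  by_contra! hle
  have hmono : StrictMono π.symm := (strictMono_iff_forall_covBy _).2 fun a b hab =>
    (hle a b hab).lt_of_ne (π.symm.injective.ne hab.ne)
  have hid : ⇑π.symm = id := (hmono.range_inj strictMono_id).1 (by simp)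
  exact hπ (Equiv.ext fun x => by simpa using (congrFun hid (π x)).symm)

section Inversions

variable {α : Type*} [LinearOrder α] [Fintype α] {ρ π : Perm α} {a b x y : α}

/-- The inversions of a permutation, recorded as pairs of positions `(x, y)` with `x < y`
(not as pairs of values); their number is the length of the permutation. -/
def inversions (π : Perm α) : Finset (α × α) :=
  {z | z.1 < z.2 ∧ π z.2 < π z.1}

lemma mem_inversions : (x, y) ∈ inversions π ↔ x < y ∧ π y < π x := by
  simp [inversions]

lemma inversions_one : inversions (1 : Perm α) = ∅ := by
  ext ⟨x, y⟩
  simpa [mem_inversions] using le_of_lt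

lemma map_inversions_mul_sdiff (h : inversions π ⊆ inversions (ρ * π)) :
    (inversions (ρ * π) \ inversions π).map (π.prodCongr π).toEmbedding = inversions ρ := by
  ext ⟨a, b⟩
  have order_symm : a < b → ρ b < ρ a → π.symm a < π.symm b := by
    intro hab hρ
    by_contra! hle
    have hlt : π.symm b < π.symm a := hle.lt_of_ne (π.symm.injective.ne hab.ne')
    have hmem := h (mem_inversions.2 ⟨hlt, by simpa using hab⟩)
    exact hρ.not_gt (by simpa using (mem_inversions.1 hmem).2)
  simp only [mem_map_equiv, mem_sdiff, prodCongr_symm, prodCongr_apply, Prod.map_apply,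
    mem_inversions, Perm.mul_apply, apply_symm_apply]
  grind

lemma card_inversions_mul (h : inversions π ⊆ inversions (ρ * π)) :
    #(inversions (ρ * π)) = #(inversions ρ) + #(inversions π) := by
  rw [← map_inversions_mul_sdiff h, card_map, card_sdiff_add_card_eq_card h]

lemma inversions_swap_of_covBy (hab : a ⋖ b) : inversions (swap a b) = {(a, b)} := by
  ext ⟨x, y⟩
  have hlt := hab.lt
  have hx := hab.2 (c := x)
  have hy := hab.2 (c := y)
  simp only [mem_inversions, mem_singleton, Prod.mk.injEq, swap_apply_def]
  grind

lemma inversions_subset_swap_mul (hab : a ⋖ b) (hπ : π.symm a < π.symm b) :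
    inversions π ⊆ inversions (swap a b * π) := by
  rintro ⟨x, y⟩ hxy
  rw [mem_inversions] at hxy ⊢
  refine ⟨hxy.1, ?_⟩
  by_contra! hle
  have hlt : swap a b (π x) < swap a b (π y) := hle.lt_of_ne (by simp [hxy.1.ne])
  have hmem : (π y, π x) ∈ inversions (swap a b) := mem_inversions.2 ⟨hxy.2, hlt⟩
  rw [inversions_swap_of_covBy hab, mem_singleton, Prod.mk.injEq] at hmem
  rw [← hmem.1, ← hmem.2, symm_apply_apply, symm_apply_apply] at hπ
  exact hπ.not_gt hxy.1

lemma card_inversions_swap_mul_of_lt (hab : a ⋖ b) (hπ : π.symm a < π.symm b) :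
    #(inversions (swap a b * π)) = #(inversions π) + 1 := by
  rw [card_inversions_mul (inversions_subset_swap_mul hab hπ), inversions_swap_of_covBy hab,
    card_singleton, add_comm]

lemma card_inversions_swap_mul_of_gt (hab : a ⋖ b) (hπ : π.symm b < π.symm a) :
    #(inversions (swap a b * π)) + 1 = #(inversions π) := by
  have hswap : (swap a b * π).symm a < (swap a b * π).symm b := by
    simpa [Perm.mul_def] using hπ
  rw [← card_inversions_swap_mul_of_lt hab hswap, swap_mul_self_mul]

lemma card_inversions_swap_mul_le (hab : a ⋖ b) (π : Perm α) :
    #(inversions (swap a b * π)) ≤ #(inversions π) + 1 := by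
  rcases lt_or_gt_of_ne (π.symm.injective.ne hab.ne) with hlt | hgt
  · exact (card_inversions_swap_mul_of_lt hab hlt).le
  · have := card_inversions_swap_mul_of_gt hab hgt
    omega

end Inversions

section Length

variable {n : ℕ}

lemma isAdjacentTransposition_iff_exists_covBy {s : Perm (Fin n)} :
    IsAdjacentTransposition s ↔ ∃ a b : Fin n, a ⋖ b ∧ s = swap a b := by
  constructor
  · rintro ⟨i, hi, rfl⟩
    exact ⟨_, _, by simp, rfl⟩
  · rintro ⟨a, ⟨_, hb⟩, hab, rfl⟩
    obtain rfl := Nat.covBy_iff_add_one_eq.1 (Fin.covBy_iff.1 hab)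
    exact ⟨a, hb, rfl⟩

lemma card_inversions_prod_le (L : List (Perm (Fin n))) (hL : ∀ s ∈ L, IsAdjacentTransposition s) :
    #(inversions L.prod) ≤ L.length := by
  induction L with
  | nil => simp [inversions_one]
  | cons s L ih =>
    rw [List.forall_mem_cons] at hL
    obtain ⟨a, b, hab, rfl⟩ := isAdjacentTransposition_iff_exists_covBy.1 hL.1
    rw [List.prod_cons, List.length_cons]
    exact (card_inversions_swap_mul_le hab _).trans (Nat.succ_le_succ (ih hL.2))

lemma exists_word_length_eq_card_inversions (π : Perm (Fin n)) :
    ∃ L : List (Perm (Fin n)), L.length = #(inversions π) ∧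
      (∀ s ∈ L, IsAdjacentTransposition s) ∧ L.prod = π := by
  induction hk : #(inversions π) generalizing π with
  | zero =>
    refine ⟨[], rfl, by simp, ?_⟩
    by_contra! hne
    obtain ⟨a, b, hab, hlt⟩ := exists_covBy_symm_lt_of_ne_one hne.symm
    have := card_inversions_swap_mul_of_gt hab hlt
    omega
  | succ k ih =>
    have hne : π ≠ 1 := by
      rintro rfl
      simp [inversions_one] at hk
    obtain ⟨a, b, hab, hlt⟩ := exists_covBy_symm_lt_of_ne_one hne
    have hcard := card_inversions_swap_mul_of_gt hab hlt
    obtain ⟨L, hlen, hL, hprod⟩ := ih (swap a b * π) (by omega)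
    refine ⟨swap a b :: L, by simp [hlen], ?_, ?_⟩
    · exact List.forall_mem_cons.2 ⟨isAdjacentTransposition_iff_exists_covBy.2 ⟨a, b, hab, rfl⟩, hL⟩
    · rw [List.prod_cons, hprod, swap_mul_self_mul]

lemma permLength_eq_card_inversions (π : Perm (Fin n)) : permLength π = #(inversions π) := by
  have hword := exists_word_length_eq_card_inversions π
  refine le_antisymm (Nat.sInf_le hword) (le_csInf ⟨_, hword⟩ ?_)
  rintro _ ⟨L, rfl, hL, rfl⟩
  exact card_inversions_prod_le L hL

lemma weakLe_mul_of_inversions_subset {ρ π : Perm (Fin n)}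
    (h : inversions π ⊆ inversions (ρ * π)) : weakLe π (ρ * π) :=
  ⟨ρ, rfl, by simpa only [permLength_eq_card_inversions] using card_inversions_mul h⟩

end Length

section Shuffle

variable {p q : ℕ}

lemma castAdd_lt_natAdd (i : Fin p) (j : Fin q) : Fin.castAdd q i < Fin.natAdd p j :=
  Nat.lt_add_right j i.isLt

lemma isShuffle_iff_strictMono {ξ : Perm (Fin (p + q))} :
    IsShuffle p q ξ ↔ StrictMono (ξ ∘ Fin.castAdd q) ∧ StrictMono (ξ ∘ Fin.natAdd p) := by
  refine and_congr ⟨fun h i j hij => h _ _ (by simpa using hij) (by simp), ?_⟩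
    ⟨fun h i j hij => h _ _ (by simp) (by simpa using hij), ?_⟩
  · intro h i j hij hj
    exact h (a := ⟨i, hij.trans hj⟩) (b := ⟨j, hj⟩) hij
  · intro h i j hi hij
    induction i using Fin.addCases with
    | left i => exact absurd hi (by simp)
    | right i =>
      induction j using Fin.addCases with
      | left j => exact absurd hij (castAdd_lt_natAdd j i).not_gt
      | right j => exact h (by simpa using hij)

lemma isShuffle_xi (p q : ℕ) : IsShuffle p q (xi p q) := by
  refine isShuffle_iff_strictMono.2 ⟨fun i j hij => ?_, fun i j hij => ?_⟩ <;>
    simpa [xi, Fin.lt_def, -Fin.val_fin_lt] using hij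

lemma blockSum_castAdd (σ : Perm (Fin p)) (τ : Perm (Fin q)) (i : Fin p) :
    blockSum σ τ (Fin.castAdd q i) = Fin.castAdd q (σ i) := by
  simp [blockSum]

lemma blockSum_natAdd (σ : Perm (Fin p)) (τ : Perm (Fin q)) (j : Fin q) :
    blockSum σ τ (Fin.natAdd p j) = Fin.natAdd p (τ j) := by
  simp [blockSum]

lemma IsShuffle.inversions_blockSum_subset {ξ : Perm (Fin (p + q))} (hξ : IsShuffle p q ξ)
    (σ : Perm (Fin p)) (τ : Perm (Fin q)) :
    inversions (blockSum σ τ) ⊆ inversions (ξ * blockSum σ τ) := by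
  obtain ⟨hleft, hright⟩ := isShuffle_iff_strictMono.1 hξ
  rintro ⟨x, y⟩ hxy
  obtain ⟨hlt, hinv⟩ := mem_inversions.1 hxy
  refine mem_inversions.2 ⟨hlt, ?_⟩
  induction x using Fin.addCases with
  | left i =>
    induction y using Fin.addCases with
    | left j =>
      simp only [Perm.mul_apply, blockSum_castAdd] at hinv ⊢
      exact hleft hinv
    | right j =>
      rw [blockSum_castAdd, blockSum_natAdd] at hinv
      exact absurd hinv (castAdd_lt_natAdd _ _).not_gt
  | right i =>
    induction y using Fin.addCases with
    | left j => exact absurd hlt (castAdd_lt_natAdd _ _).not_gt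
    | right j =>
      simp only [Perm.mul_apply, blockSum_natAdd] at hinv ⊢
      exact hright (by simpa using hinv)

end Shuffle

theorem stmt7_general {p q : ℕ} {ξ : Perm (Fin (p + q))} (hξ : IsShuffle p q ξ)
    (σ : Perm (Fin p)) (τ : Perm (Fin q)) : weakLe (blockSum σ τ) (ξ * blockSum σ τ) :=
  weakLe_mul_of_inversions_subset (hξ.inversions_blockSum_subset σ τ)

/-- for all `σ ∈ S_p`, `τ ∈ S_q` one has `σ/τ ≤ σ\τ` in the weak Bruhat
order on `S_{p+q}`. -/
theorem stmt7 (p q : ℕ) (σ : Equiv.Perm (Fin p)) (τ : Equiv.Perm (Fin q)) :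
    weakLe (overP σ τ) (underP σ τ) :=
  stmt7_general (isShuffle_xi p q) σ τ
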